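/- For every ε > 0 there exists a constant C > 0 such that for all integers k ≥ 3, all integers n with n > k, and every integer t with C · k^(5/2+ε) ≤ t ≤ k^3, every equinumerous t-coloring of [t·n] contains a rainbow arithmetic progression of length k. -/

import Mathlib

/-- `c` is an equinumerous `t`-coloring of `[t*n] = {1, ..., t*n}`:
each color class `c⁻¹(i)` for `i ∈ {1, ..., t}` has exactly `n` elements. -/
def EquinumerousColoring (t n : ℕ) (c : ℕ → ℕ) : Prop :=
  ∀ i, 1 ≤ i → i ≤ t → ((Finset.Icc 1 (t * n)).filter (fun x => c x = i)).card = n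

/-- The arithmetic progression with first term `a`, common difference `d` and
length `k` is rainbow with respect to the coloring `c`. -/
def RainbowAP (k : ℕ) (c : ℕ → ℕ) (a d : ℕ) : Prop :=
  ∀ i < k, ∀ j < k, c (a + i * d) = c (a + j * d) → i = j

/-!
There are `t * n * n` ordered pairs `(x, y)` of points of the same colour. A progression with
difference `d` that is not rainbow contains such a pair with `y - x = m * d` and `1 ≤ m < k`, and
the pair, the position of `x` in the progression and `m` determine the progression. Since `m`
divides `y - x`, a pair is contained in at most `k` times as many progressions as `y - x` has
divisors up to `k`. On average `d` has at most `1 + log k` divisors up to `k`, so at least half of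
all `d` have at most twice as many. For such `d`, every divisor of `m * d` up to `k` is a divisor
of `m` times a divisor of `d` up to `k`, so by the divisor bound there are only `k ^ o(1)` of them.
With these differences there are `≫ (t * n) * (t * n / k)` progressions in `[t * n]`, and at most
`(t * n * n) * k * k ^ o(1)` of them are not rainbow, fewer than all once `t ≥ C * k ^ (2 + ε)`.
-/

open Finset

section DivisorBound

lemma add_one_le_mul_rpow {x δ : ℝ} (hx : 2 ≤ x) (hδ : 0 < δ) (v : ℕ) :
    (v : ℝ) + 1 ≤ (1 + (δ * Real.log 2)⁻¹) * (x ^ v) ^ δ := by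
  have hlog : 0 < δ * Real.log 2 := mul_pos hδ (Real.log_pos one_lt_two)
  have hgrowth : 1 + v * (δ * Real.log 2) ≤ (x ^ v) ^ δ := calc
    1 + v * (δ * Real.log 2) ≤ Real.exp (v * (δ * Real.log 2)) := by
      linarith [Real.add_one_le_exp (v * (δ * Real.log 2))]
    _ = ((2 : ℝ) ^ v) ^ δ := by
      rw [Real.rpow_def_of_pos (by positivity), Real.log_pow]
      ring_nf
    _ ≤ (x ^ v) ^ δ := by gcongr
  calc (v : ℝ) + 1 ≤ (1 + (δ * Real.log 2)⁻¹) * (1 + v * (δ * Real.log 2)) := by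
        have hcancel : (δ * Real.log 2)⁻¹ * (δ * Real.log 2) = 1 := inv_mul_cancel₀ hlog.ne'
        have : 0 ≤ v * (δ * Real.log 2) + (δ * Real.log 2)⁻¹ := by positivity
        linear_combination this - v * hcancel
    _ ≤ _ := by gcongr

lemma add_one_le_rpow_of_two_le {x δ : ℝ} (hx : 0 ≤ x) (hxδ : 2 ≤ x ^ δ) (v : ℕ) :
    (v : ℝ) + 1 ≤ (x ^ v) ^ δ := calc
  (v : ℝ) + 1 ≤ 2 ^ v := mod_cast Nat.lt_two_pow_self
  _ ≤ (x ^ δ) ^ v := by gcongr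
  _ = (x ^ v) ^ δ := by rw [← Real.rpow_mul_natCast hx, ← Real.rpow_natCast_mul hx, mul_comm]

theorem exists_card_divisors_le_mul_rpow {δ : ℝ} (hδ : 0 < δ) :
    ∃ C : ℝ, 0 < C ∧ ∀ n : ℕ, (#n.divisors : ℝ) ≤ C * (n : ℝ) ^ δ := by
  set D : ℝ := 1 + (δ * Real.log 2)⁻¹
  have hD : 1 ≤ D := le_add_of_nonneg_right
    (inv_nonneg.mpr (mul_nonneg hδ.le (Real.log_nonneg one_le_two)))
  set M : ℕ := ⌈(2 : ℝ) ^ δ⁻¹⌉₊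
  have hlarge {p : ℕ} (hp : M ≤ p) : 2 ≤ (p : ℝ) ^ δ := by
    rw [← Real.rpow_inv_le_iff_of_pos zero_le_two p.cast_nonneg hδ]
    exact Nat.ceil_le.mp hp
  refine ⟨D ^ M, by positivity, fun n ↦ ?_⟩
  rcases eq_or_ne n 0 with rfl | hn
  · simp [Real.zero_rpow hδ.ne']
  have hfactor (p : ℕ) (hp : p ∈ n.primeFactors) : ((n.factorization p : ℝ) + 1) ≤
      (if p < M then D else 1) * ((p : ℝ) ^ n.factorization p) ^ δ := by
    have hp2 : (2 : ℝ) ≤ p := mod_cast (Nat.prime_of_mem_primeFactors hp).two_le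
    split_ifs with hpM
    · exact add_one_le_mul_rpow hp2 hδ _
    · rw [one_mul]
      exact add_one_le_rpow_of_two_le p.cast_nonneg (hlarge (not_lt.mp hpM)) _
  have hsmall : #{p ∈ n.primeFactors | p < M} ≤ M := calc
    _ ≤ #(range M) := card_le_card fun p hp ↦ mem_range.mpr (mem_filter.mp hp).2
    _ = M := card_range M
  calc (#n.divisors : ℝ) = ∏ p ∈ n.primeFactors, ((n.factorization p : ℝ) + 1) := by
        rw [Nat.card_divisors hn]
        push_cast
        rfl
    _ ≤ ∏ p ∈ n.primeFactors, (if p < M then D else 1) * ((p : ℝ) ^ n.factorization p) ^ δ :=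
        prod_le_prod (fun _ _ ↦ by positivity) hfactor
    _ = D ^ #{p ∈ n.primeFactors | p < M} * (n : ℝ) ^ δ := by
        rw [prod_mul_distrib, prod_ite, prod_const, prod_const_one, mul_one,
          Real.finsetProd_rpow _ _ fun _ _ ↦ by positivity]
        congr 2
        exact_mod_cast Nat.prod_factorization_pow_eq_self hn
    _ ≤ D ^ M * (n : ℝ) ^ δ := by gcongr

end DivisorBound

section SmallDivisors

/-- The divisors of `d` in `[1, k]`. For `d = 0` this is all of `[1, k]`. -/
def smallDivisors (k d : ℕ) : Finset ℕ := {h ∈ Icc 1 k | h ∣ d}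

lemma mem_smallDivisors {k d h : ℕ} : h ∈ smallDivisors k d ↔ (1 ≤ h ∧ h ≤ k) ∧ h ∣ d := by
  simp [smallDivisors]

lemma card_smallDivisors_mul_le {a : ℕ} (ha : a ≠ 0) (k b : ℕ) :
    #(smallDivisors k (a * b)) ≤ #a.divisors * #(smallDivisors k b) := by
  refine (card_le_card fun h hh ↦ ?_).trans (card_image₂_le (· * ·) _ _)
  obtain ⟨⟨hpos, hle⟩, hdvd⟩ := mem_smallDivisors.mp hh
  obtain ⟨g, l, hg, hl, rfl⟩ := exists_dvd_and_dvd_of_dvd_mul hdvd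
  have hgpos : 0 < g := Nat.pos_of_mul_pos_right hpos
  have hlpos : 0 < l := Nat.pos_of_mul_pos_left hpos
  exact mem_image₂_of_mem (Nat.mem_divisors.mpr ⟨hg, ha⟩)
    (mem_smallDivisors.mpr ⟨⟨hlpos, (Nat.le_mul_of_pos_left l hgpos).trans hle⟩, hl⟩)

lemma sum_card_smallDivisors_le (k Y : ℕ) :
    ∑ d ∈ Icc 1 Y, (#(smallDivisors k d) : ℝ) ≤ Y * (1 + Real.log k) := by
  have hswap : ∑ d ∈ Icc 1 Y, #(smallDivisors k d) = ∑ h ∈ Icc 1 k, Y / h := by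
    simp_rw [smallDivisors, card_filter]
    rw [sum_comm]
    simp_rw [← card_filter]
    exact sum_congr rfl fun h _ ↦ Nat.Ioc_filter_dvd_card_eq_div Y h
  calc ∑ d ∈ Icc 1 Y, (#(smallDivisors k d) : ℝ) = ∑ h ∈ Icc 1 k, ((Y / h : ℕ) : ℝ) :=
        mod_cast hswap
    _ ≤ ∑ h ∈ Icc 1 k, (Y : ℝ) * (h : ℝ)⁻¹ :=
        sum_le_sum fun h _ ↦ Nat.cast_div_le.trans_eq (div_eq_mul_inv _ _)
    _ = Y * (harmonic k : ℝ) := by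
        rw [← mul_sum, harmonic_eq_sum_Icc]
        push_cast
        rfl
    _ ≤ Y * (1 + Real.log k) := by
        gcongr
        exact harmonic_le_one_add_log k

lemma le_two_mul_card_filter_smallDivisors (k Y : ℕ) :
    Y ≤ 2 * #{d ∈ Icc 1 Y | (#(smallDivisors k d) : ℝ) ≤ 2 * (1 + Real.log k)} := by
  set L : ℝ := 1 + Real.log k
  have hL : 0 < L := by positivity
  have hsplit := card_filter_add_card_filter_not (s := Icc 1 Y)
    (fun d ↦ (#(smallDivisors k d) : ℝ) ≤ 2 * L)
  rw [Nat.card_Icc, Nat.add_sub_cancel] at hsplit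
  have hmarkov : #{d ∈ Icc 1 Y | ¬ (#(smallDivisors k d) : ℝ) ≤ 2 * L} * (2 * L) ≤ Y * L := calc
    _ ≤ ∑ d ∈ Icc 1 Y with ¬ (#(smallDivisors k d) : ℝ) ≤ 2 * L, (#(smallDivisors k d) : ℝ) := by
      rw [← nsmul_eq_mul]
      exact card_nsmul_le_sum _ _ _ fun d hd ↦ (not_le.mp (mem_filter.mp hd).2).le
    _ ≤ ∑ d ∈ Icc 1 Y, (#(smallDivisors k d) : ℝ) :=
      sum_le_sum_of_subset_of_nonneg (filter_subset _ _) fun _ _ _ ↦ by positivity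
    _ ≤ Y * L := sum_card_smallDivisors_le k Y
  have hhalf : 2 * #{d ∈ Icc 1 Y | ¬ (#(smallDivisors k d) : ℝ) ≤ 2 * L} ≤ Y := by
    rw [← Nat.cast_le (α := ℝ), ← mul_le_mul_iff_left₀ hL]
    push_cast
    linarith
  lia

theorem exists_dense_subset_card_smallDivisors_mul_le {δ : ℝ} (hδ : 0 < δ) :
    ∃ C : ℝ, 0 < C ∧ ∀ k : ℕ, 0 < k → ∃ T : ℕ, T ≤ C * (k : ℝ) ^ δ ∧
      ∀ Y : ℕ, ∃ S ⊆ Icc 1 Y, Y ≤ 2 * #S ∧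
        ∀ m ∈ Icc 1 k, ∀ d ∈ S, #(smallDivisors k (m * d)) ≤ T := by
  obtain ⟨D, hD, hdivisors⟩ := exists_card_divisors_le_mul_rpow (half_pos hδ)
  refine ⟨D * (2 * (1 + (δ / 2)⁻¹)), by positivity, fun k hk ↦ ?_⟩
  set u : ℝ := (k : ℝ) ^ (δ / 2)
  have hu : 1 ≤ u := Real.one_le_rpow (mod_cast hk) (by positivity)
  have hsq : u * u = (k : ℝ) ^ δ := by rw [← Real.rpow_add (mod_cast hk), add_halves]
  have hlog : 1 + Real.log k ≤ (1 + (δ / 2)⁻¹) * u := by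
    have := Real.log_le_rpow_div k.cast_nonneg (half_pos hδ)
    rw [div_eq_inv_mul] at this
    linarith
  refine ⟨⌊D * u * (2 * (1 + Real.log k))⌋₊, ?_, fun Y ↦
    ⟨_, filter_subset _ _, le_two_mul_card_filter_smallDivisors k Y, fun m hm d hd ↦ ?_⟩⟩
  · calc _ ≤ D * u * (2 * (1 + Real.log k)) := Nat.floor_le (by positivity)
      _ ≤ D * u * (2 * ((1 + (δ / 2)⁻¹) * u)) := by gcongr
      _ = D * (2 * (1 + (δ / 2)⁻¹)) * (k : ℝ) ^ δ := by
        rw [← hsq]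
        ring
  · obtain ⟨hm1, hmk⟩ := mem_Icc.mp hm
    refine Nat.le_floor ?_
    calc (#(smallDivisors k (m * d)) : ℝ) ≤ #m.divisors * #(smallDivisors k d) :=
          mod_cast card_smallDivisors_mul_le (Nat.one_le_iff_ne_zero.mp hm1) k d
      _ ≤ D * u * (2 * (1 + Real.log k)) := by
          gcongr
          · exact (hdivisors m).trans (mul_le_mul_of_nonneg_left
              (Real.rpow_le_rpow m.cast_nonneg (mod_cast hmk) (by positivity)) hD.le)
          · exact (mem_filter.mp hd).2

end SmallDivisors

section Coloring

variable {t n k N A Y T : ℕ} {c : ℕ → ℕ} {S : Finset ℕ}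

lemma EquinumerousColoring.color_mem_Icc (hc : EquinumerousColoring t n c) {x : ℕ}
    (hx : x ∈ Icc 1 (t * n)) : c x ∈ Icc 1 t := by
  have hcard : #{x ∈ Icc 1 (t * n) | c x ∈ Icc 1 t} = t * n := by
    have hmaps : Set.MapsTo c ({x ∈ Icc 1 (t * n) | c x ∈ Icc 1 t} : Finset ℕ) (Icc 1 t) :=
      fun x hx ↦ (mem_filter.mp hx).2
    calc _ = ∑ i ∈ Icc 1 t, #{x ∈ {x ∈ Icc 1 (t * n) | c x ∈ Icc 1 t} | c x = i} :=
          card_eq_sum_card_fiberwise hmaps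
      _ = ∑ _ ∈ Icc 1 t, n := sum_congr rfl fun i hi ↦ by
          refine (congrArg card ?_).trans (hc i (mem_Icc.mp hi).1 (mem_Icc.mp hi).2)
          rw [filter_filter]
          exact filter_congr fun x _ ↦ and_iff_right_of_imp fun hxi ↦ hxi.symm ▸ hi
      _ = t * n := by simp
  exact card_filter_eq_iff.mp (hcard.trans (by simp)) x hx

lemma EquinumerousColoring.card_filter_color_eq (hc : EquinumerousColoring t n c) {x : ℕ}
    (hx : x ∈ Icc 1 (t * n)) : #{y ∈ Icc 1 (t * n) | c x = c y} = n := by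
  obtain ⟨hpos, hle⟩ := mem_Icc.mp (hc.color_mem_Icc hx)
  simpa only [eq_comm] using hc (c x) hpos hle

/-- The ordered pairs of points of `[1, N]` with the same colour, including the pairs `(x, x)`. -/
def monochromaticPairs (N : ℕ) (c : ℕ → ℕ) : Finset (ℕ × ℕ) :=
  {p ∈ Icc 1 N ×ˢ Icc 1 N | c p.1 = c p.2}

lemma card_monochromaticPairs_le (hc : ∀ x ∈ Icc 1 N, #{y ∈ Icc 1 N | c x = c y} ≤ n) :
    #(monochromaticPairs N c) ≤ N * n := calc
  #(monochromaticPairs N c) = ∑ x ∈ Icc 1 N, #{y ∈ Icc 1 N | c x = c y} := by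
    simp_rw [monochromaticPairs, card_filter, sum_product]
  _ ≤ ∑ _ ∈ Icc 1 N, n := sum_le_sum hc
  _ = N * n := by simp

lemma exists_eq_of_not_rainbowAP {a d : ℕ} (h : ¬ RainbowAP k c a d) :
    ∃ i m, 1 ≤ m ∧ i + m < k ∧ c (a + i * d) = c (a + i * d + m * d) := by
  simp only [RainbowAP] at h
  push Not at h
  obtain ⟨i, hi, j, hj, hij, hne⟩ := h
  wlog hlt : i < j generalizing i j
  · exact this j hj i hi hij.symm hne.symm (by lia)
  refine ⟨i, j - i, by lia, by lia, ?_⟩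
  rw [add_assoc, ← add_mul, Nat.add_sub_cancel' hlt.le, hij]

/-- The data recorded for a progression `z = (a, d)` whose terms with indices `i z` and `i z + m z`
have the same colour: these two terms and the first of the two indices. The gap `m z` is left out,
since `m z * d` is the difference of the two terms. -/
def repetition (i m : ℕ × ℕ → ℕ) (z : ℕ × ℕ) : (ℕ × ℕ) × ℕ :=
  ((z.1 + i z * z.2, z.1 + i z * z.2 + m z * z.2), i z)

lemma repetition_eq_repetition_iff {i m : ℕ × ℕ → ℕ} {z z' : ℕ × ℕ} :
    repetition i m z = repetition i m z' ↔
      z.1 + i z * z.2 = z'.1 + i z' * z'.2 ∧ m z * z.2 = m z' * z'.2 ∧ i z = i z' := by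
  simp only [repetition, Prod.mk.injEq]
  lia

lemma card_filter_repetition_eq_le {P : Finset (ℕ × ℕ)} {i m : ℕ × ℕ → ℕ}
    (hm : ∀ z ∈ P, m z ∈ Icc 1 k) (hT : ∀ z ∈ P, #(smallDivisors k (m z * z.2)) ≤ T)
    (w : (ℕ × ℕ) × ℕ) : #{z ∈ P | repetition i m z = w} ≤ T := by
  rcases eq_empty_or_nonempty {z ∈ P | repetition i m z = w} with hempty | ⟨z₀, hz₀⟩
  · simp [hempty]
  obtain ⟨hz₀P, rfl⟩ := mem_filter.mp hz₀
  refine (card_le_card_of_injOn m (fun z hz ↦ ?_) fun z hz z' hz' hmm ↦ ?_).trans (hT z₀ hz₀P)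
  · obtain ⟨hz, hrep⟩ := mem_filter.mp hz
    have hdiff := (repetition_eq_repetition_iff.mp hrep).2.1
    exact mem_smallDivisors.mpr ⟨mem_Icc.mp (hm z hz), hdiff ▸ dvd_mul_right _ _⟩
  · obtain ⟨hz, hrep⟩ := mem_filter.mp hz
    obtain ⟨hstart, hdiff, hi⟩ :=
      repetition_eq_repetition_iff.mp (hrep.trans (mem_filter.mp hz').2.symm)
    rw [← hmm] at hdiff
    have hd : z.2 = z'.2 := Nat.eq_of_mul_eq_mul_left (mem_Icc.mp (hm z hz)).1 hdiff
    rw [hi, hd] at hstart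
    exact Prod.ext (Nat.add_right_cancel hstart) hd

theorem mul_card_le_of_forall_not_rainbowAP (hS : S ⊆ Icc 1 Y) (hAY : A + k * Y ≤ N)
    (hT : ∀ m ∈ Icc 1 k, ∀ d ∈ S, #(smallDivisors k (m * d)) ≤ T)
    (h : ∀ a ∈ Icc 1 A, ∀ d ∈ S, ¬ RainbowAP k c a d) :
    A * #S ≤ T * (#(monochromaticPairs N c) * k) := by
  choose! i m hm him hcol using fun z : ℕ × ℕ ↦ fun hz : z ∈ Icc 1 A ×ˢ S ↦
    exists_eq_of_not_rainbowAP (h z.1 (mem_product.mp hz).1 z.2 (mem_product.mp hz).2)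
  have hmk : ∀ z ∈ Icc 1 A ×ˢ S, m z ∈ Icc 1 k := fun z hz ↦
    mem_Icc.mpr ⟨hm z hz, (Nat.le_add_left _ _).trans (him z hz).le⟩
  have hmaps : ∀ z ∈ Icc 1 A ×ˢ S, repetition i m z ∈ monochromaticPairs N c ×ˢ range k := by
    intro z hz
    obtain ⟨ha, hd⟩ := mem_product.mp hz
    obtain ⟨ha1, haA⟩ := mem_Icc.mp ha
    have hlt := him z hz
    have hend : (i z + m z) * z.2 ≤ k * Y := Nat.mul_le_mul hlt.le (mem_Icc.mp (hS hd)).2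
    rw [add_mul] at hend
    simp only [repetition, monochromaticPairs, mem_product, mem_filter, mem_Icc, mem_range]
    exact ⟨⟨by lia, hcol z hz⟩, by lia⟩
  simpa using card_le_mul_card_image_of_maps_to hmaps T fun w _ ↦
    card_filter_repetition_eq_le hmk
      (fun z hz ↦ hT (m z) (hmk z hz) z.2 (mem_product.mp hz).2) w

theorem exists_rainbowAP_of_equinumerousColoring (hk : 0 < k) (hn : 0 < n)
    (ht : 8 * k ^ 2 * T + 2 * k ≤ t)
    (hS : ∀ Y : ℕ, ∃ S ⊆ Icc 1 Y, Y ≤ 2 * #S ∧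
      ∀ m ∈ Icc 1 k, ∀ d ∈ S, #(smallDivisors k (m * d)) ≤ T)
    (hc : EquinumerousColoring t n c) :
    ∃ a d : ℕ, 1 ≤ a ∧ 1 ≤ d ∧ a + (k - 1) * d ≤ t * n ∧ RainbowAP k c a d := by
  by_contra! hcon
  set N := t * n
  have hN : 0 < N := Nat.mul_pos (by lia) hn
  set Y := N / (2 * k)
  have hkY : 2 * (k * Y) ≤ N := by simpa only [mul_assoc] using Nat.mul_div_le N (2 * k)
  obtain ⟨S, hSY, hScard, hST⟩ := hS Y
  have hnone : ∀ a ∈ Icc 1 (N - k * Y), ∀ d ∈ S, ¬ RainbowAP k c a d := by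
    intro a ha d hd
    obtain ⟨ha1, haA⟩ := mem_Icc.mp ha
    obtain ⟨hd1, hdY⟩ := mem_Icc.mp (hSY hd)
    have : (k - 1) * d ≤ k * Y := Nat.mul_le_mul (Nat.sub_le k 1) hdY
    exact hcon a d ha1 hd1 (by lia)
  have hupper : Y ≤ 4 * (n * k * T) := by
    refine Nat.le_of_mul_le_mul_left ?_ hN
    calc N * Y ≤ (2 * (N - k * Y)) * (2 * #S) := Nat.mul_le_mul (by lia) hScard
      _ = 4 * ((N - k * Y) * #S) := by ring
      _ ≤ 4 * (T * (#(monochromaticPairs N c) * k)) := Nat.mul_le_mul_left 4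
        (mul_card_le_of_forall_not_rainbowAP hSY (by lia) hST hnone)
      _ ≤ 4 * (T * (N * n * k)) := by
        gcongr
        exact card_monochromaticPairs_le fun x hx ↦ (hc.card_filter_color_eq hx).le
      _ = N * (4 * (n * k * T)) := by ring
  have hlower : 4 * (n * k * T) + 1 ≤ Y := by
    refine (Nat.le_div_iff_mul_le (by lia)).mpr ?_
    calc (4 * (n * k * T) + 1) * (2 * k) = 8 * k ^ 2 * T * n + 2 * k * 1 := by ring
      _ ≤ 8 * k ^ 2 * T * n + 2 * k * n := by gcongr; exact hn
      _ = (8 * k ^ 2 * T + 2 * k) * n := by ring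
      _ ≤ N := Nat.mul_le_mul_right n ht
  lia

end Coloring

theorem rainbow_AP_large_n_general (ε : ℝ) (hε : 0 < ε) :
    ∃ C : ℝ, 0 < C ∧ ∀ k : ℕ, 0 < k → ∀ n : ℕ, 0 < n →
      ∀ t : ℕ, C * (k : ℝ) ^ (2 + ε) ≤ (t : ℝ) →
        ∀ c : ℕ → ℕ, EquinumerousColoring t n c →
          ∃ a d : ℕ, 1 ≤ a ∧ 1 ≤ d ∧ a + (k - 1) * d ≤ t * n ∧
            RainbowAP k c a d := by
  obtain ⟨C, hC, hdense⟩ := exists_dense_subset_card_smallDivisors_mul_le hε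
  refine ⟨8 * C + 2, by positivity, fun k hk n hn t ht c hc ↦ ?_⟩
  obtain ⟨T, hT, hS⟩ := hdense k hk
  refine exists_rainbowAP_of_equinumerousColoring hk hn ?_ hS hc
  have hk1 : (1 : ℝ) ≤ k := mod_cast hk
  have hsplit : (k : ℝ) ^ (2 + ε) = k ^ 2 * k ^ ε := by
    rw [Real.rpow_add (by positivity), Real.rpow_two]
  have hlinear : (k : ℝ) ≤ k ^ (2 + ε) := Real.self_le_rpow_of_one_le hk1 (by linarith)
  have hbound : (8 * k ^ 2 * T + 2 * k : ℝ) ≤ t := calc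
    _ ≤ 8 * (k : ℝ) ^ 2 * (C * k ^ ε) + 2 * k ^ (2 + ε) := by gcongr
    _ = (8 * C + 2) * (k : ℝ) ^ (2 + ε) := by rw [hsplit]; ring
    _ ≤ t := ht
  exact_mod_cast hbound

/-- For every `ε > 0` there is a constant `C > 0` such that for all `k ≥ 3`,
all `n > k`, and every `t` with `C * k^(5/2+ε) ≤ t ≤ k^3`, every equinumerous
`t`-coloring of `[t*n]` contains a rainbow arithmetic progression of
length `k`. -/
theorem rainbow_AP_large_n (ε : ℝ) (hε : 0 < ε) :
    ∃ C : ℝ, 0 < C ∧ ∀ k : ℕ, 3 ≤ k → ∀ n : ℕ, k < n →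
      ∀ t : ℕ, C * (k : ℝ) ^ ((5 : ℝ) / 2 + ε) ≤ (t : ℝ) → t ≤ k ^ 3 →
        ∀ c : ℕ → ℕ, EquinumerousColoring t n c →
          ∃ a d : ℕ, 1 ≤ a ∧ 1 ≤ d ∧ a + (k - 1) * d ≤ t * n ∧
            RainbowAP k c a d := by
  obtain ⟨C, hC, hrainbow⟩ := rainbow_AP_large_n_general ε hε
  refine ⟨C, hC, fun k hk n hkn t ht _ ↦ hrainbow k (by lia) n (by lia) t (le_trans ?_ ht)⟩
  have hk1 : (1 : ℝ) ≤ k := mod_cast (by lia : 1 ≤ k)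
  gcongr
  norm_num
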